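/- Let N ≥ 1 be odd and q = e^{4iπ/N}. Then the quadratic Gauss sum G_N = Σ_{k=0}^{N−1} e^{−2iπk²/N} equals √N if N ≡ 1 (mod 4) and equals −i√N if N ≡ 3 (mod 4). -/

import Mathlib

open Complex

/-- Gaussian binomial coefficients, via the Pascal recursion. -/
noncomputable def qB (q : ℂ) : ℕ → ℕ → ℂ
  | _, 0 => 1
  | 0, _ + 1 => 0
  | m + 1, k + 1 => qB q m k + q ^ (k + 1) * qB q m (k + 1)

lemma qB_zero (q : ℂ) (m : ℕ) : qB q m 0 = 1 := by cases m <;> simp [qB]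

lemma qB_succ (q : ℂ) (m k : ℕ) :
    qB q (m + 1) (k + 1) = qB q m k + q ^ (k + 1) * qB q m (k + 1) := by simp [qB]

lemma qB_big (q : ℂ) : ∀ m k : ℕ, m < k → qB q m k = 0 := by
  intro m
  induction m with
  | zero =>
    intro k hk
    obtain ⟨k, rfl⟩ : ∃ l, k = l + 1 := ⟨k - 1, by omega⟩
    simp [qB]
  | succ m ih =>
    intro k hk
    obtain ⟨k, rfl⟩ : ∃ l, k = l + 1 := ⟨k - 1, by omega⟩
    rw [qB_succ, ih k (by omega), ih (k + 1) (by omega)]; simp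

lemma qB_absorb_aux (q : ℂ) (hq : q ≠ 0) (m k : ℕ)
    (h : q ^ k * (1 - q ^ (k + 1)) * qB q m (k + 1) = (q ^ k - q ^ m) * qB q m k) :
    (1 - q ^ (k + 1)) * qB q (m + 1) (k + 1) = (1 - q ^ (m + 1)) * qB q m k := by
  rw [qB_succ]
  linear_combination q * h

lemma qB_step (q : ℂ) (hq : q ≠ 0) : ∀ m k : ℕ,
    q ^ k * (1 - q ^ (k + 1)) * qB q m (k + 1) = (q ^ k - q ^ m) * qB q m k := by
  intro m
  induction m with
  | zero =>
    intro k
    rw [qB_big q 0 (k + 1) (by omega)]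
    rcases k with _ | k
    · simp
    · rw [qB_big q 0 (k + 1) (by omega)]; simp
  | succ m ih =>
    intro k
    have h1 := qB_absorb_aux q hq m k (ih k)
    rcases k with _ | k
    · rw [qB_zero] at *
      linear_combination h1
    · rw [qB_succ q m k]
      linear_combination q ^ (k + 1) * h1 + q * ih k

lemma qB_absorb (q : ℂ) (hq : q ≠ 0) (m k : ℕ) :
    (1 - q ^ (k + 1)) * qB q (m + 1) (k + 1) = (1 - q ^ (m + 1)) * qB q m k :=
  qB_absorb_aux q hq m k (qB_step q hq m k)

noncomputable def qS (q : ℂ) (m : ℕ) : ℂ := ∑ k ∈ Finset.range (m + 1), (-1) ^ k * qB q m k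

lemma qS_rec (q : ℂ) (hq : q ≠ 0) (m : ℕ) : qS q (m + 2) = (1 - q ^ (m + 1)) * qS q m := by
  have e1 : qS q (m + 1) = ∑ k ∈ Finset.range (m + 2), (-1) ^ (k + 1) * qB q (m + 1) (k + 1) + 1 := by
    have : qS q (m + 1) = ∑ k ∈ Finset.range (m + 3), (-1) ^ k * qB q (m + 1) k := by
      rw [Finset.sum_range_succ, qB_big q (m + 1) (m + 2) (by omega)]; simp [qS]
    rw [this, Finset.sum_range_succ']; simp [qB_zero]
  have e2 : qS q m = ∑ k ∈ Finset.range (m + 2), (-1) ^ k * qB q m k := by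
    rw [Finset.sum_range_succ, qB_big q m (m + 1) (by omega)]; simp [qS]
  have e3 : qS q (m + 2) =
      ∑ k ∈ Finset.range (m + 2), (-1) ^ (k + 1) * qB q (m + 2) (k + 1) + 1 := by
    rw [qS, Finset.sum_range_succ']; simp [qB_zero]
  have e4 : ∑ k ∈ Finset.range (m + 2), (-1) ^ (k + 1) * qB q (m + 2) (k + 1) =
      - ∑ k ∈ Finset.range (m + 2), (-1) ^ k * qB q (m + 1) k
      + ∑ k ∈ Finset.range (m + 2), (-1) ^ (k + 1) * qB q (m + 1) (k + 1)
      + (1 - q ^ (m + 1)) * ∑ k ∈ Finset.range (m + 2), (-1) ^ k * qB q m k := by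
    rw [← Finset.sum_neg_distrib, Finset.mul_sum, ← Finset.sum_add_distrib,
      ← Finset.sum_add_distrib]
    refine Finset.sum_congr rfl fun k _ => ?_
    rw [qB_succ q (m + 1) k]
    linear_combination (-1) ^ k * qB_absorb q hq m k
  have e5 : qS q (m + 1) = ∑ k ∈ Finset.range (m + 2), (-1) ^ k * qB q (m + 1) k := rfl
  rw [e3, e4, ← e2, ← e5]
  linear_combination -e1

lemma qS_even (q : ℂ) (hq : q ≠ 0) (n : ℕ) :
    qS q (2 * n) = ∏ j ∈ Finset.range n, (1 - q ^ (2 * j + 1)) := by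
  induction n with
  | zero => simp [qS, qB]
  | succ n ih => rw [Finset.prod_range_succ, ← ih, mul_add, qS_rec q hq]; ring

lemma qB_root (s : ℂ) (n : ℕ) (hs : IsPrimitiveRoot s (2 * n + 1)) (k : ℕ) (hk : k ≤ 2 * n) :
    s ^ (k * (k + 1)) * qB (s ^ 2) (2 * n) k = (-1) ^ k := by
  have hs0 : s ≠ 0 := hs.ne_zero (by omega)
  have hq : IsPrimitiveRoot (s ^ 2) (2 * n + 1) :=
    hs.pow_of_coprime 2 (by simp)
  generalize hqd : s ^ 2 = q at hq
  have hq0 : q ≠ 0 := by rw [← hqd]; exact pow_ne_zero _ hs0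
  induction k with
  | zero => simp [qB_zero]
  | succ k ih =>
    have ih := ih (by omega)
    have h := qB_step q hq0 (2 * n) k
    have hne : q ^ (k + 1) ≠ 1 := hq.pow_ne_one_of_pos_of_lt (by omega) (by omega)
    have h1 := hq.pow_eq_one
    have hne' : (1 - q ^ (k + 1)) ≠ 0 := sub_ne_zero.mpr (Ne.symm hne)
    have key : q ^ (k + 1) * qB q (2 * n) (k + 1) = - qB q (2 * n) k := by
      apply mul_left_cancel₀ hne'
      linear_combination q * h - qB q (2 * n) k * h1
    have : s ^ ((k + 1) * (k + 1 + 1)) = s ^ (k * (k + 1)) * q ^ (k + 1) := by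
      rw [← hqd]; ring
    rw [this, mul_assoc, key, pow_succ, ← ih]; ring

lemma sum_shift (f : ℕ → ℂ) (N : ℕ) (hf : ∀ k, f (k + N) = f k) (a : ℕ) :
    ∑ k ∈ Finset.range N, f (k + a) = ∑ k ∈ Finset.range N, f k := by
  induction a with
  | zero => rfl
  | succ a ih =>
    rw [← ih]
    have h1 := Finset.sum_range_succ (fun k => f (k + a)) N
    have h2 := Finset.sum_range_succ' (fun k => f (k + a)) N
    have h3 : f (N + a) = f (0 + a) := by rw [add_comm N a, hf, zero_add]
    have h4 : ∀ k, f (k + (a + 1)) = f (k + 1 + a) := fun k => by congr 1; ring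
    simp only [h4]
    rw [h3] at h1
    exact add_right_cancel (h2.symm.trans h1)

lemma sq_periodic (r : ℂ) (N : ℕ) (h : r ^ N = 1) (k : ℕ) : r ^ ((k + N) ^ 2) = r ^ (k ^ 2) := by
  have : (k + N) ^ 2 = k ^ 2 + N * (2 * k + N) := by ring
  rw [this, pow_add, pow_mul, h]; simp

lemma gauss_prod (r s : ℂ) (n : ℕ) (hs : IsPrimitiveRoot s (2 * n + 1)) (hrs : r * s = 1) :
    ∑ k ∈ Finset.range (2 * n + 1), r ^ (k ^ 2) =
      ∏ j ∈ Finset.range n, (r ^ (2 * j + 1) - s ^ (2 * j + 1)) := by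
  have hs0 : s ≠ 0 := hs.ne_zero (by omega)
  have hrN : r ^ (2 * n + 1) = 1 := by
    have : (r * s) ^ (2 * n + 1) = 1 := by rw [hrs, one_pow]
    rwa [mul_pow, hs.pow_eq_one, mul_one] at this
  have hrsp : ∀ k : ℕ, r ^ k * s ^ k = 1 := fun k => by rw [← mul_pow, hrs, one_pow]
  rw [← sum_shift (fun k => r ^ (k ^ 2)) _ (sq_periodic r _ hrN) (n + 1)]
  have h1 : ∀ k ∈ Finset.range (2 * n + 1), r ^ ((k + (n + 1)) ^ 2) =
      r ^ ((n + 1) ^ 2) * ((-1) ^ k * qB (s ^ 2) (2 * n) k) := by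
    intro k hk
    have hb := qB_root s n hs k (by have := Finset.mem_range.mp hk; omega)
    have e : (k + (n + 1)) ^ 2 = (n + 1) ^ 2 + k * (k + 1) + (2 * n + 1) * k := by ring
    have h2 : ((-1 : ℂ) ^ k) * (-1) ^ k = 1 := by rw [← mul_pow]; simp
    rw [e, pow_add, pow_add, pow_mul r (2 * n + 1), hrN, one_pow, mul_one]
    congr 1
    have h3 := hrsp (k * (k + 1))
    rw [← hb]
    calc r ^ (k * (k + 1)) = r ^ (k * (k + 1)) * ((-1 : ℂ) ^ k * (-1) ^ k) := by rw [h2, mul_one]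
      _ = r ^ (k * (k + 1)) * (s ^ (k * (k + 1)) * qB (s ^ 2) (2 * n) k * (s ^ (k * (k + 1)) * qB (s ^ 2) (2 * n) k)) := by rw [hb]
      _ = _ := by linear_combination (s ^ (k * (k + 1)) * qB (s ^ 2) (2 * n) k * qB (s ^ 2) (2 * n) k) * h3
  rw [Finset.sum_congr rfl h1, ← Finset.mul_sum]
  have h4 := qS_even (s ^ 2) (pow_ne_zero _ hs0) n
  rw [qS] at h4
  rw [h4]
  have h5 : r ^ ((n + 1) ^ 2) = r ^ (n ^ 2) := by
    have : (n + 1) ^ 2 = n ^ 2 + (2 * n + 1) := by ring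
    rw [this, pow_add, hrN, mul_one]
  rw [h5]
  clear h1 h4 h5 hrN hs
  induction n with
  | zero => simp
  | succ n ih =>
    rw [Finset.prod_range_succ, Finset.prod_range_succ, ← ih]
    have : r ^ ((n + 1) ^ 2) = r ^ (n ^ 2) * r ^ (2 * n + 1) := by ring
    rw [this]
    have h3 := hrsp (2 * n + 1)
    have h6 : (s ^ 2) ^ (2 * n + 1) = s ^ (2 * n + 1) * s ^ (2 * n + 1) := by ring
    rw [h6]
    linear_combination (-(r ^ (n ^ 2)) * (∏ j ∈ Finset.range n, (1 - (s ^ 2) ^ (2 * j + 1))) * s ^ (2 * n + 1)) * h3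

lemma gauss_norm (r s : ℂ) (n : ℕ) (hr : IsPrimitiveRoot r (2 * n + 1)) (hrs : r * s = 1) :
    (∑ k ∈ Finset.range (2 * n + 1), r ^ (k ^ 2)) * (∑ k ∈ Finset.range (2 * n + 1), s ^ (k ^ 2))
      = (2 * n + 1 : ℕ) := by
  have hrsp : ∀ k : ℕ, r ^ k * s ^ k = 1 := fun k => by rw [← mul_pow, hrs, one_pow]
  have hrN := hr.pow_eq_one
  rw [Finset.mul_sum]
  have h1 : ∀ b ∈ Finset.range (2 * n + 1),
      (∑ k ∈ Finset.range (2 * n + 1), r ^ (k ^ 2)) * s ^ (b ^ 2) =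
      ∑ c ∈ Finset.range (2 * n + 1), r ^ (c ^ 2) * ((r ^ 2) ^ c) ^ b := by
    intro b _
    rw [← sum_shift (fun k => r ^ (k ^ 2)) _ (sq_periodic r _ hrN) b, Finset.sum_mul]
    refine Finset.sum_congr rfl fun c _ => ?_
    have e : r ^ ((c + b) ^ 2) = r ^ (c ^ 2) * ((r ^ 2) ^ c) ^ b * r ^ (b ^ 2) := by ring
    rw [e, mul_assoc, hrsp, mul_one]
  rw [Finset.sum_congr rfl h1, Finset.sum_comm, Finset.sum_range_succ']
  have h2 : ∀ c ∈ Finset.range (2 * n), ∑ b ∈ Finset.range (2 * n + 1),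
      r ^ ((c + 1) ^ 2) * ((r ^ 2) ^ (c + 1)) ^ b = 0 := by
    intro c hc
    rw [← Finset.mul_sum]
    have hq : IsPrimitiveRoot (r ^ 2) (2 * n + 1) := hr.pow_of_coprime 2 (by simp)
    have hne : (r ^ 2) ^ (c + 1) ≠ 1 :=
      hq.pow_ne_one_of_pos_of_lt (by omega) (by have := Finset.mem_range.mp hc; omega)
    rw [geom_sum_eq hne, ← pow_mul, mul_comm (c + 1), pow_mul, hq.pow_eq_one]
    simp
  rw [Finset.sum_congr rfl h2]
  simp

lemma gauss_main (N a m : ℕ) (hN : N = 2 * (a + m) + 1) (h1 : 4 * a < N + 2)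
    (h2 : N < 4 * a + 2) :
    ∑ k ∈ Finset.range N, Complex.exp (-(2 * Real.pi * I * (k : ℂ) ^ 2) / N) =
      (-I) ^ (a + m) * (-1) ^ m * Real.sqrt N := by
  have hN0 : N ≠ 0 := by omega
  have hNC : (N : ℂ) ≠ 0 := by exact_mod_cast hN0
  have hNR : (0 : ℝ) < N := by exact_mod_cast Nat.pos_of_ne_zero hN0
  have hs : IsPrimitiveRoot (exp (2 * Real.pi * I / N)) N := Complex.isPrimitiveRoot_exp N hN0
  set s := exp (2 * Real.pi * I / N) with hsd
  set r := exp (-(2 * Real.pi * I / N)) with hrd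
  have hrs : r * s = 1 := by rw [hrd, hsd, ← exp_add]; simp
  have hrinv : r = s⁻¹ := eq_inv_of_mul_eq_one_left hrs
  have hr : IsPrimitiveRoot r N := by rw [hrinv]; exact hs.inv
  have hsum : ∑ k ∈ Finset.range N, Complex.exp (-(2 * Real.pi * I * (k : ℂ) ^ 2) / N) =
      ∑ k ∈ Finset.range N, r ^ (k ^ 2) := by
    refine Finset.sum_congr rfl fun k _ => ?_
    rw [hrd, ← exp_nat_mul]; congr 1; push_cast; ring
  rw [hsum]
  have hconj : (starRingEnd ℂ) r = s := by
    rw [hrd, hsd, ← exp_conj]; congr 1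
    have h2 : (starRingEnd ℂ) 2 = 2 := Complex.conj_ofNat 2
    simp only [map_neg, map_div₀, map_mul, h2, conj_ofReal, conj_I, map_natCast]
    ring
  have hprod := gauss_prod r s (a + m) (hN ▸ hs) hrs
  have hnorm := gauss_norm r s (a + m) (hN ▸ hr) hrs
  rw [← hN] at hprod hnorm
  set t : ℕ → ℝ := fun j => 2 * Real.sin (2 * Real.pi * (2 * j + 1) / N) with ht
  have hfac : ∀ j : ℕ, r ^ (2 * j + 1) - s ^ (2 * j + 1) = (-I) * (t j : ℂ) := by
    intro j
    have e1 : r ^ (2 * j + 1) = exp (-(2 * Real.pi * (2 * j + 1) / N : ℂ) * I) := by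
      rw [hrd, ← exp_nat_mul]; congr 1; push_cast; ring
    have e2 : s ^ (2 * j + 1) = exp ((2 * Real.pi * (2 * j + 1) / N : ℂ) * I) := by
      rw [hsd, ← exp_nat_mul]; congr 1; push_cast; ring
    rw [e1, e2, ht]
    push_cast
    rw [Complex.sin]
    linear_combination (exp (-(2 * Real.pi * (2 * j + 1) / N : ℂ) * I) - exp ((2 * Real.pi * (2 * j + 1) / N : ℂ) * I)) * I_sq
  set R : ℝ := (∏ j ∈ Finset.range a, t j) * ∏ j ∈ Finset.range m, (- t (a + j)) with hR
  have hG : ∑ k ∈ Finset.range N, r ^ (k ^ 2) = (-I) ^ (a + m) * (-1) ^ m * (R : ℂ) := by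
    rw [hprod, Finset.prod_congr rfl (fun j _ => hfac j), Finset.prod_mul_distrib,
      Finset.prod_range_add (fun j => (t j : ℂ)), hR]
    push_cast
    have h5 : ∏ j ∈ Finset.range m, (-(t (a + j) : ℂ)) =
        (-1) ^ m * ∏ j ∈ Finset.range m, (t (a + j) : ℂ) := by
      rw [Finset.prod_neg, Finset.card_range]
    rw [h5]
    have h2 : ((-1 : ℂ) ^ m) * (-1) ^ m = 1 := by rw [← mul_pow]; simp
    simp only [Finset.prod_const, Finset.card_range]
    linear_combination (-((-I) ^ (a + m) * (∏ j ∈ Finset.range a, (t j : ℂ)) * ∏ j ∈ Finset.range m, (t (a + j) : ℂ))) * h2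
  have hRpos : 0 < R := by
    refine mul_pos (Finset.prod_pos fun j hj => ?_) (Finset.prod_pos fun j hj => ?_)
    · have hj := Finset.mem_range.mp hj
      have hlt : (2 * (2 * j + 1) : ℝ) < N := by
        have : 2 * (2 * j + 1) < N := by omega
        exact_mod_cast this
      refine mul_pos two_pos (Real.sin_pos_of_pos_of_lt_pi (by positivity) ?_)
      rw [div_lt_iff₀ hNR]
      nlinarith [Real.pi_pos]
    · have hj := Finset.mem_range.mp hj
      have hlt : (N : ℝ) < 2 * (2 * ((a + j : ℕ) : ℝ) + 1) := by
        have : N < 2 * (2 * (a + j) + 1) := by omega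
        exact_mod_cast this
      have hlt2 : (2 * ((a + j : ℕ) : ℝ) + 1) < N := by
        have : 2 * (a + j) + 1 < N := by omega
        exact_mod_cast this
      have e : - t (a + j) = 2 * Real.sin (2 * Real.pi * (2 * ((a + j : ℕ) : ℝ) + 1) / N - Real.pi) := by
        rw [Real.sin_sub_pi]; simp [ht]
      rw [e]
      refine mul_pos two_pos (Real.sin_pos_of_pos_of_lt_pi ?_ ?_)
      · rw [sub_pos, lt_div_iff₀ hNR]; nlinarith [Real.pi_pos]
      · rw [sub_lt_iff_lt_add, div_lt_iff₀ hNR]; nlinarith [Real.pi_pos]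
  have hGc : ∑ k ∈ Finset.range N, s ^ (k ^ 2) = I ^ (a + m) * (-1) ^ m * (R : ℂ) := by
    have := congrArg (starRingEnd ℂ) hG
    simpa [map_sum, hconj] using this
  have hR2 : R ^ 2 = N := by
    rw [hG, hGc] at hnorm
    have h2 : ((-1 : ℂ) ^ m) * (-1) ^ m = 1 := by rw [← mul_pow]; simp
    have h3 : (-I) ^ (a + m) * I ^ (a + m) = 1 := by rw [← mul_pow]; simp
    have : (R : ℂ) ^ 2 = N := by
      rw [← hnorm]
      calc (R : ℂ) ^ 2 = ((-I) ^ (a + m) * I ^ (a + m)) * ((-1 : ℂ) ^ m * (-1) ^ m) * R ^ 2 := by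
            rw [h2, h3]; ring
        _ = _ := by ring
    exact_mod_cast this
  have : Real.sqrt N = R := by rw [← hR2, Real.sqrt_sq hRpos.le]
  rw [hG, this]

theorem gauss_sum_odd (N : ℕ) (hN : 1 ≤ N) (hodd : Odd N) :
    (N % 4 = 1 →
      ∑ k ∈ Finset.range N, Complex.exp (-(2 * Real.pi * I * (k : ℂ) ^ 2) / N) =
        Real.sqrt N) ∧
    (N % 4 = 3 →
      ∑ k ∈ Finset.range N, Complex.exp (-(2 * Real.pi * I * (k : ℂ) ^ 2) / N) =
        -I * Real.sqrt N) := by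
  have key : ∀ m : ℕ, (-I) ^ (m + m) * (-1) ^ m = 1 := fun m => by
    rw [← two_mul, pow_mul, ← mul_pow]; simp
  constructor
  · intro h
    rw [gauss_main N (N / 4) (N / 4) (by omega) (by omega) (by omega), key, one_mul]
  · intro h
    rw [gauss_main N (N / 4 + 1) (N / 4) (by omega) (by omega) (by omega)]
    congr 1
    linear_combination (-I) * key (N / 4)
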